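/- Let U be a simply connected open subset of ℂ and let A : U → Matrix (Fin n) (Fin n) ℂ be holomorphic (entrywise). Then the set of holomorphic solutions Y : U → ℂⁿ of the linear differential equation Y' = A(z)·Y forms a ℂ-vector space of dimension exactly n. -/

import Mathlib

/-!
Fix a point `c ∈ U`. Near `c` the equation `W' = L(z) W` for operator-valued `W` with `W c = 1` is
solved by the series of iterated primitives, and `W` stays invertible near `c`. Two such local
fundamental solutions satisfy `(W₁⁻¹ W₂)' = 0`, so they differ by a locally constant right factor.
Hence their locally constant multiples are the sections of a covering space of `U`, which has a
global section because `U` is simply connected. Such a section is an invertible solution `W` of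
`W' = L(z) W` on all of `U`. Finally `(W⁻¹ F)' = 0` for every solution `F` of `F' = L(z) F`, so the
solutions are exactly the functions `z ↦ W z v`.
-/

open Filter Metric Set
open scoped Topology

/-- A multivalued map from `X` to a group `G`, given by branches on open sets covering `X`, any two
of which differ by a locally constant right factor where both are defined. As for `FiberBundleCore`,
the covering is recorded by a choice `indexAt` of an index for each point, and the value of a branch
outside its base set is irrelevant. -/
structure MultivaluedMap (ι X G : Type*) [TopologicalSpace X] [Group G] where
  baseSet : ι → Set X
  isOpen_baseSet : ∀ i, IsOpen (baseSet i)
  indexAt : X → ι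
  mem_baseSet_at : ∀ x, x ∈ baseSet (indexAt x)
  branch : ι → X → G
  eventually_inv_mul_eq : ∀ i j, ∀ x ∈ baseSet i ∩ baseSet j,
    ∀ᶠ y in 𝓝 x, (branch i y)⁻¹ * branch j y = (branch i x)⁻¹ * branch j x

namespace MultivaluedMap

variable {ι X G : Type*} [TopologicalSpace X] [Group G] (M : MultivaluedMap ι X G)

section Bundle

variable [TopologicalSpace G] [DiscreteTopology G]

/-- The bundle of germs of branches of `M`, with discrete fibre: `g` in the chart `i` stands for the
germ of `M.branch i * g`. -/
def bundleCore : FiberBundleCore ι X G where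
  baseSet := M.baseSet
  isOpen_baseSet := M.isOpen_baseSet
  indexAt := M.indexAt
  mem_baseSet_at := M.mem_baseSet_at
  coordChange i j x g := (M.branch j x)⁻¹ * (M.branch i x * g)
  coordChange_self i x _ g := inv_mul_cancel_left _ _
  coordChange_comp i j k x _ g := by simp only [mul_inv_cancel_left]
  continuousOn_coordChange i j := by
    rintro ⟨x, g⟩ ⟨hx, -⟩
    refine (continuousAt_const.congr (f := fun _ ↦ (M.branch j x)⁻¹ * (M.branch i x * g))
      ?_).continuousWithinAt
    have hg : ∀ᶠ p : X × G in 𝓝 (x, g), p.2 = g :=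
      continuousAt_snd.eventually_mem (s := {g}) (by simp [nhds_discrete])
    filter_upwards [hg, continuousAt_fst.eventually (M.eventually_inv_mul_eq j i x hx.symm)]
      with p hp hpx
    rw [hp, ← mul_assoc, ← mul_assoc, hpx]

/-- The value at its base point of the germ of a branch. -/
def germValue (p : M.bundleCore.TotalSpace) : G :=
  let g : G := p.snd
  M.branch (M.indexAt p.proj) p.proj * g

lemma localTriv_snd (i : ι) (p : M.bundleCore.TotalSpace) :
    (M.bundleCore.localTriv i p).2 = (M.branch i p.proj)⁻¹ * M.germValue p := rfl

lemma eventually_inv_mul_germValue_eq {s : X → M.bundleCore.TotalSpace} (hs : Continuous s)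
    (hproj : ∀ x, (s x).proj = x) {i : ι} {x : X} (hx : x ∈ M.baseSet i) :
    ∀ᶠ y in 𝓝 x,
      (M.branch i y)⁻¹ * M.germValue (s y) = (M.branch i x)⁻¹ * M.germValue (s x) := by
  have hmem : s x ∈ (M.bundleCore.localTriv i).source := by
    rw [M.bundleCore.mem_localTriv_source, hproj]
    exact hx
  have hcont : ContinuousAt (fun y ↦ (M.bundleCore.localTriv i (s y)).2) x :=
    (((M.bundleCore.localTriv i).continuousAt hmem).comp hs.continuousAt).snd
  simp only [localTriv_snd, hproj] at hcont
  exact hcont.eventually_mem (s := {_}) (by simp [nhds_discrete])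

end Bundle

theorem exists_forall_eventually_inv_mul_eq [SimplyConnectedSpace X]
    [LocallyPathConnectedSpace X] :
    ∃ f : X → G, ∀ i, ∀ x ∈ M.baseSet i,
      ∀ᶠ y in 𝓝 x, (M.branch i y)⁻¹ * f y = (M.branch i x)⁻¹ * f x := by
  let : TopologicalSpace G := ⊥
  have : DiscreteTopology G := ⟨rfl⟩
  have hcov : IsCoveringMap M.bundleCore.proj :=
    FiberBundle.isCoveringMap (E := M.bundleCore.Fiber)
  obtain ⟨x₀⟩ : Nonempty X := inferInstance
  obtain ⟨s, ⟨-, hs⟩, -⟩ :=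
    hcov.existsUnique_continuousMap_lifts (ContinuousMap.id X) x₀ ⟨x₀, (1 : G)⟩ rfl
  exact ⟨fun x ↦ M.germValue (s x), fun i x hx ↦
    M.eventually_inv_mul_germValue_eq s.continuous (congrFun hs) hx⟩

end MultivaluedMap

lemma eventually_eq_of_hasDerivAt_zero {𝕜 E : Type*} [RCLike 𝕜] [NormedAddCommGroup E]
    [NormedSpace 𝕜 E] {f : 𝕜 → E} {s : Set 𝕜} (hs : IsOpen s) (hf : ∀ z ∈ s, HasDerivAt f 0 z)
    {z : 𝕜} (hz : z ∈ s) : ∀ᶠ w in 𝓝 z, f w = f z := by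
  have hopen := hs.isOpen_inter_preimage_of_deriv_eq_zero
    (fun w hw ↦ (hf w hw).differentiableAt.differentiableWithinAt) (fun w hw ↦ (hf w hw).deriv)
    {f z}
  filter_upwards [hopen.mem_nhds ⟨hz, rfl⟩] with w hw using hw.2

lemma norm_le_mul_of_hasDerivAt_ball {𝕜 E : Type*} [RCLike 𝕜] [NormedAddCommGroup E]
    [NormedSpace 𝕜 E] {f f' : 𝕜 → E} {c z : 𝕜} {r C : ℝ}
    (hf : ∀ z ∈ ball c r, HasDerivAt f (f' z) z) (hC : ∀ z ∈ ball c r, ‖f' z‖ ≤ C) (hfc : f c = 0)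
    (hz : z ∈ ball c r) : ‖f z‖ ≤ C * r := by
  have hc : c ∈ ball c r := mem_ball_self (pos_of_mem_ball hz)
  have hC₀ : 0 ≤ C := (norm_nonneg _).trans (hC c hc)
  calc ‖f z‖ = ‖f z - f c‖ := by rw [hfc, sub_zero]
    _ ≤ C * ‖z - c‖ := (convex_ball c r).norm_image_sub_le_of_norm_hasDerivWithin_le
        (fun w hw ↦ (hf w hw).hasDerivWithinAt) hC hc hz
    _ ≤ C * r := by gcongr; exact (mem_ball_iff_norm.1 hz).le

lemma exists_ball_norm_le_mul_lt_one {α E : Type*} [PseudoMetricSpace α]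
    [SeminormedAddCommGroup E] {f : α → E} {U : Set α} (hU : IsOpen U) (hf : ContinuousOn f U)
    {c : α} (hc : c ∈ U) :
    ∃ r > 0, ball c r ⊆ U ∧ ∃ M, (∀ z ∈ ball c r, ‖f z‖ ≤ M) ∧ M * r < 1 := by
  have hev : ∀ᶠ z in 𝓝 c, z ∈ U ∧ ‖f z‖ < ‖f c‖ + 1 :=
    (hU.eventually_mem hc).and
      ((hf.continuousAt (hU.mem_nhds hc)).norm.eventually_lt_const (lt_add_one _))
  obtain ⟨ε, hε, hball⟩ := Metric.eventually_nhds_iff_ball.1 hev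
  obtain ⟨δ, hδ, hδ'⟩ := exists_pos_mul_lt one_pos (‖f c‖ + 1)
  have hsub : ball c (min ε δ) ⊆ ball c ε := ball_subset_ball (min_le_left _ _)
  refine ⟨min ε δ, lt_min hε hδ, fun z hz ↦ (hball z (hsub hz)).1, ‖f c‖ + 1,
    fun z hz ↦ (hball z (hsub hz)).2.le, lt_of_le_of_lt ?_ hδ'⟩
  gcongr
  exact min_le_right _ _

lemma differentiableOn_mulVecLin {𝕜 D m n : Type*} [NontriviallyNormedField 𝕜] [CompleteSpace 𝕜]
    [NormedAddCommGroup D] [NormedSpace 𝕜 D] [Finite m] [Fintype n] {A : D → Matrix m n 𝕜}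
    {U : Set D} (hA : ∀ i j, DifferentiableOn 𝕜 (fun z ↦ A z i j) U) :
    DifferentiableOn 𝕜 (fun z ↦ (A z).mulVecLin.toContinuousLinearMap) U := by
  cases nonempty_fintype m
  let Φ : (m → n → 𝕜) →ₗ[𝕜] (n → 𝕜) →L[𝕜] (m → 𝕜) :=
    LinearMap.toContinuousLinearMap.toLinearMap ∘ₗ Matrix.mulVecBilin 𝕜 𝕜 ∘ₗ
      (Matrix.ofLinearEquiv 𝕜).toLinearMap
  exact Φ.toContinuousLinearMap.differentiable.comp_differentiableOn
    (differentiableOn_pi.2 fun i ↦ differentiableOn_pi.2 (hA i))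

namespace LinearODE

section FundamentalSolution

variable {𝕜 𝔸 : Type*} [NontriviallyNormedField 𝕜] [NormedRing 𝔸] [NormedAlgebra 𝕜 𝔸]

/-- `W` is a fundamental solution on `U` of the equation `W' = a W` in a normed algebra, i.e. an
invertible solution. Invertibility is encoded by letting `W` take values in the units. -/
def IsFundamentalSolutionOn (a : 𝕜 → 𝔸) (W : 𝕜 → 𝔸ˣ) (U : Set 𝕜) : Prop :=
  ∀ z ∈ U, HasDerivAt (fun w ↦ (W w : 𝔸)) (a z * W z) z

namespace IsFundamentalSolutionOn

variable {a : 𝕜 → 𝔸} {W W₁ W₂ : 𝕜 → 𝔸ˣ} {U U₁ U₂ : Set 𝕜}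

lemma hasDerivAt_inv [CompleteSpace 𝔸] (hW : IsFundamentalSolutionOn a W U) {z : 𝕜} (hz : z ∈ U) :
    HasDerivAt (fun w ↦ (↑(W w)⁻¹ : 𝔸)) (-(↑(W z)⁻¹ * a z)) z := by
  have h := (hasFDerivAt_ringInverse (𝕜 := 𝕜) (W z)).comp_hasDerivAt z (hW z hz)
  simpa [Function.comp_def, mul_assoc] using h

lemma hasDerivAt_inv_mul [CompleteSpace 𝔸] (hW₁ : IsFundamentalSolutionOn a W₁ U₁)
    (hW₂ : IsFundamentalSolutionOn a W₂ U₂) {z : 𝕜} (hz : z ∈ U₁ ∩ U₂) :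
    HasDerivAt (fun w ↦ (↑(W₁ w)⁻¹ * W₂ w : 𝔸)) 0 z := by
  simpa [mul_assoc] using! (hW₁.hasDerivAt_inv hz.1).mul (hW₂ z hz.2)

section Apply

variable {E : Type*} [NormedAddCommGroup E] [NormedSpace 𝕜 E] {L : 𝕜 → E →L[𝕜] E}
  {W : 𝕜 → (E →L[𝕜] E)ˣ}

lemma hasDerivAt_smul_const (hW : IsFundamentalSolutionOn L W U) {z : 𝕜} (hz : z ∈ U) (v : E) :
    HasDerivAt (fun w ↦ W w • v) (L z (W z • v)) z := by
  simpa using! (hW z hz).clm_apply (hasDerivAt_const z v)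

lemma hasDerivAt_inv_smul [CompleteSpace E] (hW : IsFundamentalSolutionOn L W U) {z : 𝕜}
    (hz : z ∈ U) {F : 𝕜 → E} (hF : HasDerivAt F (L z (F z)) z) :
    HasDerivAt (fun w ↦ (W w)⁻¹ • F w) 0 z := by
  simpa using! (hW.hasDerivAt_inv hz).clm_apply hF

end Apply

end IsFundamentalSolutionOn

end FundamentalSolution

section Rigidity

variable {𝕜 : Type*} [RCLike 𝕜]

lemma IsFundamentalSolutionOn.eventually_inv_mul_eq {𝔸 : Type*} [NormedRing 𝔸] [NormedAlgebra 𝕜 𝔸]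
    [CompleteSpace 𝔸] {a : 𝕜 → 𝔸} {W₁ W₂ : 𝕜 → 𝔸ˣ} {U₁ U₂ : Set 𝕜}
    (hW₁ : IsFundamentalSolutionOn a W₁ U₁) (hW₂ : IsFundamentalSolutionOn a W₂ U₂)
    (hU₁ : IsOpen U₁) (hU₂ : IsOpen U₂) {z : 𝕜} (hz : z ∈ U₁ ∩ U₂) :
    ∀ᶠ w in 𝓝 z, (W₁ w)⁻¹ * W₂ w = (W₁ z)⁻¹ * W₂ z := by
  filter_upwards [eventually_eq_of_hasDerivAt_zero (hU₁.inter hU₂)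
    (fun _ ↦ hW₁.hasDerivAt_inv_mul hW₂) hz] with w hw using Units.ext hw

lemma IsFundamentalSolutionOn.inv_smul_eq_inv_smul {E : Type*} [NormedAddCommGroup E]
    [NormedSpace 𝕜 E] [CompleteSpace E] {L : 𝕜 → E →L[𝕜] E} {W : 𝕜 → (E →L[𝕜] E)ˣ} {F : 𝕜 → E}
    {U : Set 𝕜} (hW : IsFundamentalSolutionOn L W U) (hU : IsOpen U) (hUc : IsPreconnected U)
    (hF : ∀ z ∈ U, HasDerivAt F (L z (F z)) z) {z w : 𝕜} (hz : z ∈ U) (hw : w ∈ U) :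
    (W z)⁻¹ • F z = (W w)⁻¹ • F w := by
  have hderiv (x) (hx : x ∈ U) := hW.hasDerivAt_inv_smul hx (hF x hx)
  exact hU.is_const_of_deriv_eq_zero hUc
    (fun x hx ↦ (hderiv x hx).differentiableAt.differentiableWithinAt)
    (fun x hx ↦ (hderiv x hx).deriv) hz hw

end Rigidity

section Existence

lemma norm_iterated_primitive_le {𝕜 𝔸 : Type*} [RCLike 𝕜] [NormedRing 𝔸] [NormedAlgebra 𝕜 𝔸]
    {a : 𝕜 → 𝔸} {D : ℕ → 𝕜 → 𝔸} {c : 𝕜} {r M : ℝ} (hD₀ : D 0 = 1) (hDc : ∀ k, D (k + 1) c = 0)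
    (hD : ∀ k, ∀ z ∈ ball c r, HasDerivAt (D (k + 1)) (a z * D k z) z)
    (hM : ∀ z ∈ ball c r, ‖a z‖ ≤ M) (k : ℕ) :
    ∀ z ∈ ball c r, ‖D k z‖ ≤ ‖(1 : 𝔸)‖ * (M * r) ^ k := by
  induction k with
  | zero => simp [hD₀]
  | succ k ih =>
    intro z hz
    calc ‖D (k + 1) z‖ ≤ M * (‖(1 : 𝔸)‖ * (M * r) ^ k) * r :=
          norm_le_mul_of_hasDerivAt_ball (hD k)
            (fun w hw ↦ norm_mul_le_of_le (hM w hw) (ih w hw)) (hDc k) hz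
      _ = ‖(1 : 𝔸)‖ * (M * r) ^ (k + 1) := by ring

variable {𝔸 : Type*} [NormedRing 𝔸] [NormedAlgebra ℂ 𝔸] [CompleteSpace 𝔸] {a : ℂ → 𝔸}

lemma exists_iterated_primitives {c : ℂ} {r : ℝ} (ha : DifferentiableOn ℂ a (ball c r)) :
    ∃ D : ℕ → ℂ → 𝔸, D 0 = 1 ∧ (∀ k, D (k + 1) c = 0) ∧
      ∀ k, ∀ z ∈ ball c r, HasDerivAt (D (k + 1)) (a z * D k z) z := by
  have hprim (f : {f : ℂ → 𝔸 // DifferentiableOn ℂ f (ball c r)}) :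
      ∃ g : {g : ℂ → 𝔸 // DifferentiableOn ℂ g (ball c r)},
        g.1 c = 0 ∧ ∀ z ∈ ball c r, HasDerivAt g.1 (a z * f.1 z) z := by
    obtain ⟨g, hgc, hg⟩ := (ha.mul f.2).isExactOn_ball.with_val_at c 0
    exact ⟨⟨g, fun z hz ↦ (hg z hz).differentiableAt.differentiableWithinAt⟩, hgc, hg⟩
  choose P hPc hP using hprim
  let D (k : ℕ) := P^[k] ⟨1, differentiableOn_const 1⟩
  have hD_succ (k : ℕ) : D (k + 1) = P (D k) := Function.iterate_succ_apply' P k _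
  refine ⟨fun k ↦ (D k).1, rfl, fun k ↦ ?_, fun k ↦ ?_⟩
  · simpa only [hD_succ] using hPc (D k)
  · simpa only [hD_succ] using hP (D k)

lemma exists_hasDerivAt_mul_ball {c : ℂ} {r M : ℝ} (ha : DifferentiableOn ℂ a (ball c r))
    (hr : 0 < r) (hM : ∀ z ∈ ball c r, ‖a z‖ ≤ M) (hMr : M * r < 1) :
    ∃ Φ : ℂ → 𝔸, Φ c = 1 ∧ ∀ z ∈ ball c r, HasDerivAt Φ (a z * Φ z) z := by
  obtain ⟨D, hD₀, hDc, hD⟩ := exists_iterated_primitives ha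
  have hnorm := norm_iterated_primitive_le hD₀ hDc hD hM
  have hc : c ∈ ball c r := mem_ball_self hr
  have hM₀ : 0 ≤ M := (norm_nonneg _).trans (hM c hc)
  have hgeom : Summable fun k ↦ ‖(1 : 𝔸)‖ * (M * r) ^ k :=
    (summable_geometric_of_lt_one (by positivity) hMr).mul_left _
  have hsum (z) (hz : z ∈ ball c r) : Summable fun k ↦ D k z :=
    .of_norm_bounded hgeom fun k ↦ hnorm k z hz
  refine ⟨fun z ↦ 1 + ∑' k, D (k + 1) z, by simp [hDc], fun z hz ↦ ?_⟩
  have hderiv : HasDerivAt (fun w ↦ ∑' k, D (k + 1) w) (∑' k, a z * D k z) z :=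
    hasDerivAt_tsum_of_isPreconnected (hgeom.mul_left M) isOpen_ball
      (convex_ball c r).isPreconnected hD
      (fun k w hw ↦ norm_mul_le_of_le (hM w hw) (hnorm k w hw)) hc (by simp [hDc, summable_zero]) hz
  rw [(hsum z hz).tsum_mul_left, (hsum z hz).tsum_eq_zero_add, hD₀, Pi.one_apply] at hderiv
  exact hderiv.const_add 1

lemma exists_isFundamentalSolutionOn_nhds {U : Set ℂ} (hU : IsOpen U)
    (ha : DifferentiableOn ℂ a U) {c : ℂ} (hc : c ∈ U) :
    ∃ V, IsOpen V ∧ c ∈ V ∧ ∃ W, IsFundamentalSolutionOn a W V := by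
  obtain ⟨r, hr, hrU, M, hM, hMr⟩ := exists_ball_norm_le_mul_lt_one hU ha.continuousOn hc
  obtain ⟨Φ, hΦc, hΦ⟩ := exists_hasDerivAt_mul_ball (ha.mono hrU) hr hM hMr
  have hΦ_cont : ContinuousOn Φ (ball c r) := fun z hz ↦
    (hΦ z hz).continuousAt.continuousWithinAt
  have hV : IsOpen (ball c r ∩ Φ ⁻¹' {x | IsUnit x}) :=
    hΦ_cont.isOpen_inter_preimage isOpen_ball Units.isOpen
  choose! W hW using fun z (hz : z ∈ ball c r ∩ Φ ⁻¹' {x | IsUnit x}) ↦ hz.2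
  refine ⟨_, hV, ⟨mem_ball_self hr, by simp [hΦc]⟩, W, fun z hz ↦ ?_⟩
  have hWΦ : (fun w ↦ (W w : 𝔸)) =ᶠ[𝓝 z] Φ := eventually_of_mem (hV.mem_nhds hz) hW
  rw [hW z hz]
  exact (hΦ z hz.1).congr_of_eventuallyEq hWΦ

theorem exists_isFundamentalSolutionOn {U : Set ℂ} [SimplyConnectedSpace U] (hU : IsOpen U)
    (ha : DifferentiableOn ℂ a U) : ∃ W, IsFundamentalSolutionOn a W U := by
  choose V hV hcV W hW using fun c : U ↦ exists_isFundamentalSolutionOn_nhds hU ha c.2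
  let M : MultivaluedMap U U 𝔸ˣ :=
    { baseSet i := Subtype.val ⁻¹' V i
      isOpen_baseSet i := (hV i).preimage continuous_subtype_val
      indexAt := id
      mem_baseSet_at := hcV
      branch i x := W i x
      eventually_inv_mul_eq i j _ hx := continuousAt_subtype_val.eventually
        ((hW i).eventually_inv_mul_eq (hW j) (hV i) (hV j) hx) }
  have := hU.locallyPathConnectedSpace
  obtain ⟨f, hf⟩ := M.exists_forall_eventually_inv_mul_eq
  let F : ℂ → 𝔸ˣ := Function.extend Subtype.val f 1
  have hF (x : U) : F x = f x := Subtype.val_injective.extend_apply f 1 x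
  refine ⟨F, fun z hz ↦ ?_⟩
  let i : U := ⟨z, hz⟩
  have hloc : ∀ᶠ w in 𝓝 z, F w = W i w * ((W i z)⁻¹ * F z) := by
    rw [← map_nhds_subtype_coe_eq_nhds hz (hU.mem_nhds hz), eventually_map]
    filter_upwards [hf i i (hcV i)] with x hx
    rw [hF x, hF i]
    exact inv_mul_eq_iff_eq_mul.1 hx
  have hderiv := (hW i z (hcV i)).mul_const (↑((W i z)⁻¹ * F z) : 𝔸)
  rw [mul_assoc, ← Units.val_mul, mul_inv_cancel_left] at hderiv
  exact hderiv.congr_of_eventuallyEq (hloc.mono fun w hw ↦ by simp only [hw, Units.val_mul])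

end Existence

section SolutionSpace

/-- The space of solutions on `U` of the linear equation `F' = L(z) F`. A solution is a function on
the subtype `U`; its derivative is taken along an arbitrary extension, which does not matter when
`U` is open. -/
def solutionSpace {𝕜 E : Type*} [NontriviallyNormedField 𝕜] [NormedAddCommGroup E]
    [NormedSpace 𝕜 E] (L : 𝕜 → E →L[𝕜] E) (U : Set 𝕜) : Submodule 𝕜 (U → E) where
  carrier := {Y | ∃ F : 𝕜 → E, (∀ z : U, F z = Y z) ∧ ∀ z ∈ U, HasDerivAt F (L z (F z)) z}
  zero_mem' := ⟨0, fun _ ↦ rfl, fun z _ ↦ by simp⟩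
  add_mem' := by
    rintro _ _ ⟨F, hFY, hF⟩ ⟨G, hGY, hG⟩
    exact ⟨F + G, fun z ↦ by simp [hFY, hGY],
      fun z hz ↦ by simpa using (hF z hz).add (hG z hz)⟩
  smul_mem' := by
    rintro c _ ⟨F, hFY, hF⟩
    exact ⟨c • F, fun z ↦ by simp [hFY], fun z hz ↦ by simpa using (hF z hz).const_smul c⟩

variable {E : Type*} [NormedAddCommGroup E] [NormedSpace ℂ E] [CompleteSpace E]

theorem bijective_eval_solutionSpace {U : Set ℂ} [SimplyConnectedSpace U] (hU : IsOpen U)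
    {L : ℂ → E →L[ℂ] E} (hL : DifferentiableOn ℂ L U) (z₀ : U) :
    Function.Bijective (LinearMap.proj z₀ ∘ₗ (solutionSpace L U).subtype) := by
  obtain ⟨W, hW⟩ := exists_isFundamentalSolutionOn hU hL
  have hUc : IsPreconnected U := isPreconnected_iff_preconnectedSpace.2 inferInstance
  constructor
  · rintro ⟨Y, F, hFY, hF⟩ ⟨Y', G, hGY, hG⟩ (h : Y z₀ = Y' z₀)
    ext z
    refine MulAction.injective (W z)⁻¹ ?_
    calc (W z)⁻¹ • Y z = (W z₀)⁻¹ • Y z₀ := by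
          simpa only [hFY] using hW.inv_smul_eq_inv_smul hU hUc hF z.2 z₀.2
      _ = (W z₀)⁻¹ • Y' z₀ := by rw [h]
      _ = (W z)⁻¹ • Y' z := by
          simpa only [hGY] using hW.inv_smul_eq_inv_smul hU hUc hG z₀.2 z.2
  · intro v
    let F (z : ℂ) : E := W z • (W z₀)⁻¹ • v
    exact ⟨⟨fun z ↦ F z, F, fun _ ↦ rfl, fun z hz ↦ hW.hasDerivAt_smul_const hz _⟩,
      smul_inv_smul (W z₀) v⟩

end SolutionSpace

end LinearODE

theorem solution_space_linear_ode_dim_general {E : Type*} [NormedAddCommGroup E] [NormedSpace ℂ E]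
    [CompleteSpace E] {U : Set ℂ} [SimplyConnectedSpace U] (hU : IsOpen U) {L : ℂ → E →L[ℂ] E}
    (hL : DifferentiableOn ℂ L U) :
    Module.rank ℂ (LinearODE.solutionSpace L U) = Module.rank ℂ E := by
  obtain ⟨z₀⟩ : Nonempty U := inferInstance
  exact (LinearEquiv.ofBijective _ (LinearODE.bijective_eval_solutionSpace hU hL z₀)).rank_eq

theorem solution_space_linear_ode_dim
    (n : ℕ) (U : Set ℂ) (hU : IsOpen U) (hconn : IsConnected U)
    (hsc : SimplyConnectedSpace U)
    (A : ℂ → Matrix (Fin n) (Fin n) ℂ)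
    (hA : ∀ i j, DifferentiableOn ℂ (fun z => A z i j) U) :
    ∃ S : Submodule ℂ (U → (Fin n → ℂ)),
      (↑S = {Y : U → (Fin n → ℂ) |
        ∃ F : ℂ → (Fin n → ℂ),
          (∀ z : U, F z = Y z) ∧
          ∀ z ∈ U, HasDerivAt F ((A z).mulVec (F z)) z}) ∧
      Module.rank ℂ S = n :=
  ⟨LinearODE.solutionSpace (fun z ↦ (A z).mulVecLin.toContinuousLinearMap) U, rfl, by
    rw [solution_space_linear_ode_dim_general hU (differentiableOn_mulVecLin hA), rank_fin_fun]⟩
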